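/- arXiv:1611.06444 — 2 statements merged into one kernel-verified Lean document; each statement's English description precedes it below -/
import Mathlib

section
/- Let Γ be a strongly connected digraph on vertices {1,…,n}, with total sandpile group S = S(Γ) and sandpile groups at the vertices S_i = S_i(Γ). If G is a finite abelian group such that for every i ∈ {1,…,n} there exists a surjective group homomorphism S_i → G, then there exists a surjective group homomorphism S → G. -/
open Matrix

noncomputable section

/-- The Laplacian of the digraph on `Fin n` with edge multiplicities `d i j ∈ ℕ`:
`L i j = -d i j` for `i ≠ j` and `L i i = outdeg i - d i i = ∑_{k ≠ i} d i k`. -/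
def digraphLaplacian {n : ℕ} (d : Fin n → Fin n → ℕ) : Matrix (Fin n) (Fin n) ℤ :=
  Matrix.of fun i j => if i = j then ∑ k ∈ Finset.univ.erase i, (d i k : ℤ) else -(d i j : ℤ)

/-- `ℤ₀ⁿ`: the submodule of `ℤⁿ` of vectors whose coordinates sum to zero. -/
def zeroSum (n : ℕ) : Submodule ℤ (Fin n → ℤ) where
  carrier := {v | ∑ i, v i = 0}
  add_mem' := by
    intro x y hx hy
    simp only [Set.mem_setOf_eq, Pi.add_apply, Finset.sum_add_distrib] at *
    rw [hx, hy, add_zero]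
  zero_mem' := by simp
  smul_mem' := by
    intro c x hx
    simp only [Set.mem_setOf_eq, Pi.smul_apply, smul_eq_mul, ← Finset.mul_sum] at *
    rw [hx, mul_zero]

/-- The total sandpile group `S(Γ) = ℤ₀ⁿ / L(Γ)ℤⁿ`, where the Laplacian acts on row
vectors (so that its image lies in `ℤ₀ⁿ`). -/
abbrev totalSandpile {n : ℕ} (d : Fin n → Fin n → ℕ) : Type :=
  zeroSum n ⧸ Submodule.comap (zeroSum n).subtype
    (LinearMap.range (Matrix.mulVecLin (digraphLaplacian d)ᵀ))

/-- The sandpile group at the vertex `i`: `S_i(Γ) = ℤ^{n-1} / L_i ℤ^{n-1}`, where `L_i` is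
the Laplacian with the `i`-th row and column removed. -/
abbrev vertexSandpile {n : ℕ} (d : Fin (n + 1) → Fin (n + 1) → ℕ) (i : Fin (n + 1)) : Type :=
  (Fin n → ℤ) ⧸ LinearMap.range
    (Matrix.mulVecLin ((digraphLaplacian d).submatrix i.succAbove i.succAbove)ᵀ)

/-- A digraph with edge multiplicities `d` is strongly connected if any vertex can be
reached from any other through edges of positive multiplicity. -/
def StronglyConnected {n : ℕ} (d : Fin n → Fin n → ℕ) : Prop :=
  ∀ i j : Fin n, Relation.ReflTransGen (fun u v => 0 < d u v) i j

/-!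
The rows `x i` of the Laplacian are `n + 1` vectors in `ℤ₀ⁿ⁺¹ ≅ ℤⁿ`, so they satisfy a relation
`∑ i, p i • x i = 0` whose coefficients have greatest common divisor `1`. Dropping the `i`-th
coordinate identifies `S i` with the quotient of `ℤ₀ⁿ⁺¹` by the rows other than `x i`. The
relation shows that if `f : ℤ₀ⁿ⁺¹ → G` kills these rows, then `p i • f` kills `x i` as well and
descends to the total sandpile group `S`. For every prime `q` some `p i` is prime to `q`, so some
map `S → G` is surjective modulo `q`; by the Chinese remainder theorem these maps combine into
one that is surjective modulo every prime dividing `|G|`, and such a map is surjective.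
-/

section LocalToGlobal

open scoped Pointwise

variable {R N : Type*} [CommRing R] [AddCommGroup N] [Module R N]

theorem sup_mul_smul_top_eq_top {K : Submodule R N} {a b : R}
    (ha : K ⊔ a • ⊤ = ⊤) (hb : K ⊔ b • ⊤ = ⊤) : K ⊔ (a * b) • ⊤ = ⊤ := by
  refine top_le_iff.mp ?_
  calc (⊤ : Submodule R N) = K ⊔ a • (K ⊔ b • ⊤) := by rw [hb, ha]
    _ = (K ⊔ a • K) ⊔ (a * b) • ⊤ := by rw [Submodule.smul_sup', smul_smul, sup_assoc]
    _ ≤ K ⊔ (a * b) • ⊤ :=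
      sup_le_sup_right (sup_le le_rfl (Submodule.smul_le_self_of_tower a K)) _

theorem range_le_range_smul_sup_smul_top {M : Type*} [AddCommGroup M] [Module R M] {c m : R}
    (hcm : IsCoprime c m) (f : M →ₗ[R] N) : f.range ≤ (c • f).range ⊔ m • ⊤ := by
  rintro _ ⟨x, rfl⟩
  obtain ⟨a, b, hab⟩ := hcm
  refine Submodule.mem_sup.mpr ⟨(c • f) (a • x), ⟨_, rfl⟩, m • f (b • x),
    Submodule.smul_mem_pointwise_smul _ _ _ trivial, ?_⟩
  rw [LinearMap.smul_apply, ← map_smul, ← map_smul, ← map_add, smul_smul, smul_smul, ← add_smul,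
    mul_comm c, mul_comm m, hab, one_smul]

theorem range_le_range_sum_smul_sup_smul_top {ι M : Type*} [AddCommGroup M] [Module R M]
    {s : Finset ι} {w : ι → R} {m : R} {i : ι} (hi : i ∈ s) (hwi : IsCoprime (w i) m)
    (hw : ∀ j ∈ s, j ≠ i → m ∣ w j) (φ : ι → M →ₗ[R] N) :
    (φ i).range ≤ (∑ j ∈ s, w j • φ j).range ⊔ m • ⊤ := by
  classical
  suffices h : (w i • φ i).range ≤ (∑ j ∈ s, w j • φ j).range ⊔ m • ⊤ from
    (range_le_range_smul_sup_smul_top hwi (φ i)).trans (sup_le h le_sup_right)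
  rintro _ ⟨x, rfl⟩
  have hrest : ∑ j ∈ s.erase i, (w j • φ j) x ∈ m • (⊤ : Submodule R N) := by
    refine Submodule.sum_mem _ fun j hj => ?_
    obtain ⟨c, hc⟩ := hw j (Finset.mem_of_mem_erase hj) (Finset.ne_of_mem_erase hj)
    rw [LinearMap.smul_apply, hc, mul_smul]
    exact Submodule.smul_mem_pointwise_smul _ _ _ trivial
  have hsum : (w i • φ i) x + ∑ j ∈ s.erase i, (w j • φ j) x = (∑ j ∈ s, w j • φ j) x := by
    rw [LinearMap.sum_apply, Finset.add_sum_erase s (fun j => (w j • φ j) x) hi]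
  rw [eq_sub_of_add_eq hsum]
  exact sub_mem (Submodule.mem_sup_left ⟨x, rfl⟩) (Submodule.mem_sup_right hrest)

variable {M G : Type*} [AddCommGroup M] [AddCommGroup G]

theorem sup_natCast_smul_top_eq_top_of_forall_prime {K : Submodule ℤ G} {m : ℕ} (hm : m ≠ 0)
    (hK : ∀ q : ℕ, q.Prime → q ∣ m → K ⊔ (q : ℤ) • ⊤ = ⊤) : K ⊔ (m : ℤ) • ⊤ = ⊤ := by
  induction m using induction_on_primes with
  | zero => exact absurd rfl hm
  | one => simp
  | prime_mul p a hp ih =>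
    rw [Nat.cast_mul]
    exact sup_mul_smul_top_eq_top (hK p hp (dvd_mul_right p a))
      (ih (right_ne_zero_of_mul hm) fun q hq hqa => hK q hq (hqa.mul_left p))

theorem exists_surjective_of_forall_prime_range_sup_smul_top_eq_top {m : ℕ} (hm : m ≠ 0)
    (hG : ∀ g : G, m • g = 0)
    (h : ∀ q : ℕ, q.Prime → q ∣ m → ∃ φ : M →ₗ[ℤ] G, φ.range ⊔ (q : ℤ) • ⊤ = ⊤) :
    ∃ ψ : M →ₗ[ℤ] G, Function.Surjective ψ := by
  choose! φ hφ using h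
  -- Modulo `q`, the weight `w q` is invertible and all other weights vanish.
  let w : ℕ → ℤ := fun q => ∏ r ∈ m.primeFactors.erase q, (r : ℤ)
  let ψ : M →ₗ[ℤ] G := ∑ q ∈ m.primeFactors, w q • φ q
  have coprime_weight (q : ℕ) (hq : q.Prime) : IsCoprime (w q) (q : ℤ) := by
    refine IsCoprime.prod_left fun r hr => Nat.isCoprime_iff_coprime.mpr ?_
    obtain ⟨hrq, hr⟩ := Finset.mem_erase.mp hr
    exact (Nat.coprime_primes (Nat.prime_of_mem_primeFactors hr) hq).mpr hrq
  have dvd_weight {q r : ℕ} (hq : q ∈ m.primeFactors) (hrq : r ≠ q) : (q : ℤ) ∣ w r :=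
    Finset.dvd_prod_of_mem (fun p : ℕ => (p : ℤ)) (Finset.mem_erase.mpr ⟨hrq.symm, hq⟩)
  have hψ : ψ.range ⊔ (m : ℤ) • ⊤ = ⊤ := by
    refine sup_natCast_smul_top_eq_top_of_forall_prime hm fun q hq hqm => top_le_iff.mp ?_
    have hqm' : q ∈ m.primeFactors := Nat.mem_primeFactors.mpr ⟨hq, hqm, hm⟩
    have hφψ : (φ q).range ≤ ψ.range ⊔ (q : ℤ) • ⊤ :=
      range_le_range_sum_smul_sup_smul_top hqm' (coprime_weight q hq)
        (fun _ _ hrq => dvd_weight hqm' hrq) φ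
    exact (hφ q hq hqm).ge.trans (sup_le hφψ le_sup_right)
  have smul_top : (m : ℤ) • (⊤ : Submodule ℤ G) = ⊥ := by
    refine eq_bot_iff.mpr ?_
    rintro _ ⟨g, -, rfl⟩
    simpa using hG g
  exact ⟨ψ, LinearMap.range_eq_top.mp (by rwa [smul_top, sup_bot_eq] at hψ)⟩

end LocalToGlobal

section DependentFamily

variable {ι M G : Type*} [AddCommGroup M] [AddCommGroup G]

theorem exists_gcd_eq_one_sum_smul_eq_zero {R : Type*} [CommRing R] [IsDomain R]
    [NormalizedGCDMonoid R] [Module R M] [Module.IsTorsionFree R M] {x : ι → M}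
    (hx : ¬ LinearIndependent R x) :
    ∃ (s : Finset ι) (p : ι → R), s.gcd p = 1 ∧ ∑ i ∈ s, p i • x i = 0 := by
  obtain ⟨s, v, hv, k, hks, hk⟩ := not_linearIndependent_iff.mp hx
  obtain ⟨p, hvp, hp⟩ := s.extract_gcd v ⟨k, hks⟩
  have hgcd : s.gcd v ≠ 0 := fun h0 => hk (Finset.gcd_eq_zero_iff.mp h0 k hks)
  refine ⟨s, p, hp, smul_right_injective M hgcd ?_⟩
  simp only [smul_zero, Finset.smul_sum, smul_smul]
  rw [← hv]
  exact Finset.sum_congr rfl fun i hi => by rw [hvp i hi]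

theorem smul_map_eq_zero_of_sum_smul_eq_zero {R : Type*} [Ring R] [Module R M] [Module R G]
    {x : ι → M} {s : Finset ι} {p : ι → R} (hp : ∑ j ∈ s, p j • x j = 0) {i : ι} (hi : i ∈ s)
    {f : M →ₗ[R] G} (hf : ∀ j ≠ i, f (x j) = 0) (j : ι) : p i • f (x j) = 0 := by
  by_cases hji : j = i
  · subst hji
    calc p j • f (x j) = ∑ k ∈ s, p k • f (x k) :=
          (Finset.sum_eq_single_of_mem (f := fun k => p k • f (x k)) j hi
            fun k _ hk => by rw [hf k hk, smul_zero]).symm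
      _ = f (∑ k ∈ s, p k • x k) := by simp only [map_sum, map_smul]
      _ = 0 := by rw [hp, map_zero]
  · rw [hf j hji, smul_zero]

open scoped Pointwise in
theorem exists_surjective_quotient_span_range_of_not_linearIndependent
    [Module.IsTorsionFree ℤ M] {x : ι → M} (hx : ¬ LinearIndependent ℤ x) {m : ℕ} (hm : m ≠ 0)
    (hG : ∀ g : G, m • g = 0)
    (h : ∀ i, ∃ f : (M ⧸ Submodule.span ℤ (x '' {i}ᶜ)) →ₗ[ℤ] G, Function.Surjective f) :
    ∃ f : (M ⧸ Submodule.span ℤ (Set.range x)) →ₗ[ℤ] G, Function.Surjective f := by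
  choose f hf using h
  obtain ⟨s, p, hgcd, hp⟩ := exists_gcd_eq_one_sum_smul_eq_zero hx
  refine exists_surjective_of_forall_prime_range_sup_smul_top_eq_top hm hG fun q hq _ => ?_
  have hqZ : Prime (q : ℤ) := Nat.prime_iff_prime_int.mp hq
  obtain ⟨i, his, hqi⟩ : ∃ i ∈ s, ¬ (q : ℤ) ∣ p i := by
    by_contra! hall
    exact hqZ.not_dvd_one (hgcd ▸ Finset.dvd_gcd hall)
  let F : M →ₗ[ℤ] G := f i ∘ₗ Submodule.mkQ _
  have hFx (j : ι) (hj : j ≠ i) : F (x j) = 0 := by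
    have hxj : x j ∈ Submodule.span ℤ (x '' {i}ᶜ) :=
      Submodule.subset_span (Set.mem_image_of_mem x hj)
    rw [LinearMap.comp_apply, Submodule.mkQ_apply, (Submodule.Quotient.mk_eq_zero _).mpr hxj,
      map_zero]
  have hspan : Submodule.span ℤ (Set.range x) ≤ (p i • F).ker := by
    rw [Submodule.span_le]
    rintro _ ⟨j, rfl⟩
    exact smul_map_eq_zero_of_sum_smul_eq_zero hp his hFx j
  have hF : F.range = ⊤ :=
    LinearMap.range_eq_top.mpr ((hf i).comp (Submodule.mkQ_surjective _))
  refine ⟨Submodule.liftQ _ (p i • F) hspan, top_le_iff.mp ?_⟩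
  calc ⊤ = F.range := hF.symm
    _ ≤ (p i • F).range ⊔ (q : ℤ) • ⊤ :=
      range_le_range_smul_sup_smul_top (hqZ.coprime_iff_not_dvd.mpr hqi).symm F
    _ = (Submodule.liftQ _ (p i • F) hspan).range ⊔ (q : ℤ) • ⊤ := by rw [Submodule.range_liftQ]

end DependentFamily

section Laplacian

variable {n : ℕ}

theorem sum_digraphLaplacian_row (d : Fin n → Fin n → ℕ) (i : Fin n) :
    ∑ j, digraphLaplacian d i j = 0 := by
  have hoff : ∑ j ∈ Finset.univ.erase i, digraphLaplacian d i j =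
      -∑ j ∈ Finset.univ.erase i, (d i j : ℤ) := by
    rw [← Finset.sum_neg_distrib]
    refine Finset.sum_congr rfl fun j hj => ?_
    simp [digraphLaplacian, (Finset.ne_of_mem_erase hj).symm]
  rw [← Finset.add_sum_erase _ _ (Finset.mem_univ i), hoff]
  simp [digraphLaplacian]

/-- Dropping the `i`-th coordinate, as an isomorphism `ℤ₀ⁿ⁺¹ ≃ ℤⁿ`. -/
def zeroSumEquiv (i : Fin (n + 1)) : zeroSum (n + 1) ≃ₗ[ℤ] (Fin n → ℤ) where
  toFun v := i.removeNth (v : Fin (n + 1) → ℤ)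
  map_add' _ _ := rfl
  map_smul' _ _ := rfl
  invFun w := ⟨i.insertNth (-∑ k, w k) w, by
    change ∑ k, (i.insertNth (-∑ k, w k) w : Fin (n + 1) → ℤ) k = 0
    simp [Fin.sum_univ_succAbove _ i]⟩
  left_inv v := by
    have hv : v.1 i + ∑ k, v.1 (i.succAbove k) = 0 :=
      (Fin.sum_univ_succAbove v.1 i).symm.trans v.2
    refine Subtype.ext ?_
    change i.insertNth (-∑ k, v.1 (i.succAbove k)) (i.removeNth v.1) = v.1
    rw [← eq_neg_of_add_eq_zero_left hv, Fin.insertNth_self_removeNth]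
  right_inv w := Fin.removeNth_insertNth _ _ _

theorem not_linearIndependent_zeroSum (x : Fin (n + 1) → zeroSum (n + 1)) :
    ¬ LinearIndependent ℤ x := by
  intro hx
  have hcard := (hx.map' _ (zeroSumEquiv 0).ker).fintype_card_le_finrank
  simp at hcard

/-- The `i`-th row of an integer matrix whose row sums vanish, as an element of `ℤ₀ⁿ`. -/
def zeroSumRow {L : Matrix (Fin n) (Fin n) ℤ} (hL : ∀ i, ∑ j, L i j = 0) (i : Fin n) : zeroSum n :=
  ⟨L i, hL i⟩

theorem comap_range_mulVecLin_transpose {L : Matrix (Fin n) (Fin n) ℤ} (hL : ∀ i, ∑ j, L i j = 0) :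
    (LinearMap.range Lᵀ.mulVecLin).comap (zeroSum n).subtype =
      Submodule.span ℤ (Set.range (zeroSumRow hL)) := by
  have hrows : Set.range Lᵀ.col = (zeroSum n).subtype '' Set.range (zeroSumRow hL) := by
    rw [← Set.range_comp]
    rfl
  rw [Matrix.range_mulVecLin, hrows, ← Submodule.map_span,
    Submodule.comap_map_eq_of_injective (zeroSum n).injective_subtype]

theorem map_zeroSumEquiv_span_rows {L : Matrix (Fin (n + 1)) (Fin (n + 1)) ℤ}
    (hL : ∀ i, ∑ j, L i j = 0) (i : Fin (n + 1)) :
    (Submodule.span ℤ (zeroSumRow hL '' {i}ᶜ)).map (zeroSumEquiv i : _ →ₗ[ℤ] Fin n → ℤ) =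
      LinearMap.range (L.submatrix i.succAbove i.succAbove)ᵀ.mulVecLin := by
  rw [Matrix.range_mulVecLin, Submodule.map_span, ← Fin.range_succAbove, ← Set.range_comp,
    ← Set.range_comp]
  rfl

theorem total_sandpile_surjects_of_vertex_surjects_general
    {L : Matrix (Fin (n + 1)) (Fin (n + 1)) ℤ} (hL : ∀ i, ∑ j, L i j = 0)
    (G : Type*) [AddCommGroup G] [Finite G]
    (h : ∀ i : Fin (n + 1), ∃ f : ((Fin n → ℤ) ⧸
      LinearMap.range (L.submatrix i.succAbove i.succAbove)ᵀ.mulVecLin) →+ G,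
      Function.Surjective f) :
    ∃ f : (zeroSum (n + 1) ⧸
      (LinearMap.range Lᵀ.mulVecLin).comap (zeroSum (n + 1)).subtype) →+ G,
      Function.Surjective f := by
  choose f hf using h
  let e (i : Fin (n + 1)) :=
    Submodule.Quotient.equiv _ _ (zeroSumEquiv i) (map_zeroSumEquiv_span_rows hL i)
  obtain ⟨g, hg⟩ := exists_surjective_quotient_span_range_of_not_linearIndependent
    (not_linearIndependent_zeroSum (zeroSumRow hL)) Nat.card_pos.ne'
    (fun _ : G => card_nsmul_eq_zero') fun i =>
      ⟨(f i).toIntLinearMap ∘ₗ (e i : _ →ₗ[ℤ] _), (hf i).comp (e i).surjective⟩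
  rw [comap_range_mulVecLin_transpose hL]
  exact ⟨g.toAddMonoidHom, hg⟩

end Laplacian

/-- For a strongly connected digraph, if a finite abelian group `G` admits a surjection from
every vertex sandpile group `S_i`, then it admits a surjection from the total sandpile
group `S`. -/
theorem total_sandpile_surjects_of_vertex_surjects {n : ℕ}
    (d : Fin (n + 1) → Fin (n + 1) → ℕ) (hconn : StronglyConnected d)
    (G : Type*) [AddCommGroup G] [Finite G]
    (h : ∀ i : Fin (n + 1), ∃ f : vertexSandpile d i →+ G, Function.Surjective f) :
    ∃ f : totalSandpile d →+ G, Function.Surjective f :=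
  total_sandpile_surjects_of_vertex_surjects_general (sum_digraphLaplacian_row d) G h

end
end

section
/- Let Γ be a strongly connected digraph on vertices {1,…,n}, with total sandpile group S = S(Γ) and sandpile groups at the vertices S_i = S_i(Γ). Then there exist elements γ_1 ∈ S_1, …, γ_n ∈ S_n such that S_i / ⟨γ_i⟩ ≅ S for every i ∈ {1,…,n}, and gcd(ord(γ_1), …, ord(γ_n)) = 1, where ⟨γ_i⟩ is the cyclic subgroup generated by γ_i and ord(γ_i) is its order. -/
open Matrix

noncomputable section

/-! Every row of the Laplacian `L` sums to zero, so a vector in `ℤ₀ⁿ` is determined by its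
entries away from `i`: deleting the `i`-th entry identifies `ℤ₀ⁿ` with `ℤⁿ⁻¹`. It sends the
`i`-th row of `L` to a vector `rᵢ` and the other rows to those of the reduced Laplacian `Lᵢ`.
Hence `γᵢ`, the class of `rᵢ` in `Sᵢ`, satisfies `Sᵢ / ⟨γᵢ⟩ ≅ S` by the third isomorphism
theorem. Since `L` is singular, its rows satisfy an integral relation `x ᵥ* L = 0` whose
coefficients have no common factor. Deleting the `i`-th entry from this relation gives
`xᵢ γᵢ = 0`, so the greatest common divisor of the orders divides that of the `xᵢ`. -/

theorem nonempty_quotient_zmultiples_addEquiv_quotient_sup {M : Type*} [AddCommGroup M]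
    (N : Submodule ℤ M) (v : M) :
    Nonempty (((M ⧸ N) ⧸ AddSubgroup.zmultiples (N.mkQ v)) ≃+
      (M ⧸ N ⊔ Submodule.span ℤ {v})) := by
  have span_eq : AddSubgroup.zmultiples (N.mkQ v) =
      ((Submodule.span ℤ {v}).map N.mkQ).toAddSubgroup := by
    rw [Submodule.map_span, Set.image_singleton,
      Submodule.span_singleton_toAddSubgroup_eq_zmultiples]
  exact ⟨(QuotientAddGroup.quotientAddEquivOfEq span_eq).trans
    (Submodule.quotientQuotientEquivQuotientSup N (Submodule.span ℤ {v})).toAddEquiv⟩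

theorem exists_gcd_eq_one_and_vecMul_eq_zero {R m : Type*} [CommRing R] [IsDomain R]
    [NormalizedGCDMonoid R] [Fintype m] [DecidableEq m] {A : Matrix m m R} (hA : A.det = 0) :
    ∃ x : m → R, Finset.univ.gcd x = 1 ∧ x ᵥ* A = 0 := by
  obtain ⟨y, hy, hyA⟩ := exists_vecMul_eq_zero_iff.mpr hA
  obtain ⟨i, -⟩ := Function.ne_iff.mp hy
  obtain ⟨x, hx, hgcd⟩ := Finset.extract_gcd y ⟨i, Finset.mem_univ i⟩
  have y_eq : y = Finset.univ.gcd y • x := funext fun j => hx j (Finset.mem_univ j)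
  have gcd_ne_zero : Finset.univ.gcd y ≠ 0 := fun h => hy (by rw [y_eq, h, zero_smul])
  rw [y_eq, smul_vecMul] at hyA
  exact ⟨x, hgcd, (smul_eq_zero.mp hyA).resolve_left gcd_ne_zero⟩

theorem gcd_addOrderOf_dvd_gcd {ι : Type*} {G : ι → Type*} [∀ i, AddGroup (G i)] {s : Finset ι}
    {γ : ∀ i, G i} {x : ι → ℤ} (h : ∀ i ∈ s, x i • γ i = 0) :
    ((s.gcd fun i => addOrderOf (γ i) : ℕ) : ℤ) ∣ s.gcd x :=
  Finset.dvd_gcd fun i hi => (Int.natCast_dvd_natCast.mpr (Finset.gcd_dvd hi)).trans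
    (addOrderOf_dvd_iff_zsmul_eq_zero.mpr (h i hi))

section Deletion

variable {n : ℕ}

theorem mem_zeroSum {v : Fin n → ℤ} : v ∈ zeroSum n ↔ ∑ j, v j = 0 :=
  Iff.rfl

theorem insertNth_neg_sum_mem_zeroSum (i : Fin (n + 1)) (w : Fin n → ℤ) :
    (i.insertNth (-∑ j, w j) w : Fin (n + 1) → ℤ) ∈ zeroSum (n + 1) := by
  simp [mem_zeroSum, Fin.sum_univ_succAbove _ i]

theorem neg_sum_removeNth_of_mem_zeroSum (i : Fin (n + 1)) {v : Fin (n + 1) → ℤ}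
    (hv : v ∈ zeroSum (n + 1)) : -∑ j, i.removeNth v j = v i := by
  rw [mem_zeroSum, Fin.sum_univ_succAbove _ i] at hv
  exact (eq_neg_of_add_eq_zero_left hv).symm

/-- Deletion of the `i`-th entry, as an isomorphism `ℤ₀ⁿ⁺¹ ≃ ℤⁿ`. -/
def zeroSumDeleteEquiv (i : Fin (n + 1)) : zeroSum (n + 1) ≃ₗ[ℤ] (Fin n → ℤ) where
  __ := LinearMap.funLeft ℤ ℤ i.succAbove ∘ₗ (zeroSum (n + 1)).subtype
  invFun w := ⟨i.insertNth (-∑ j, w j) w, insertNth_neg_sum_mem_zeroSum i w⟩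
  left_inv v := by
    ext1
    change i.insertNth (-∑ j, i.removeNth v.1 j) (i.removeNth v.1) = v.1
    rw [neg_sum_removeNth_of_mem_zeroSum i v.2, Fin.insertNth_self_removeNth]
  right_inv w := i.removeNth_insertNth (α := fun _ => ℤ) _ w

theorem map_zeroSumDeleteEquiv_comap_subtype (i : Fin (n + 1)) {N : Submodule ℤ (Fin (n + 1) → ℤ)}
    (hN : N ≤ zeroSum (n + 1)) :
    (N.comap (zeroSum (n + 1)).subtype).map (zeroSumDeleteEquiv i).toLinearMap =
      N.map (LinearMap.funLeft ℤ ℤ i.succAbove) := by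
  change (N.comap _).map (LinearMap.funLeft ℤ ℤ i.succAbove ∘ₗ (zeroSum (n + 1)).subtype) = _
  rw [Submodule.map_comp, Submodule.map_comap_subtype, inf_eq_right.mpr hN]

end Deletion

section Cokernels

variable {R : Type*} [CommRing R] {n : ℕ}

/-- The reduced cokernel of a square matrix `A` at `i`: the cokernel of `A` acting on row vectors,
after deletion of its `i`-th row and column. For the Laplacian it is the sandpile group `Sᵢ`. -/
abbrev ReducedCokernel (A : Matrix (Fin (n + 1)) (Fin (n + 1)) R) (i : Fin (n + 1)) : Type _ :=
  (Fin n → R) ⧸ LinearMap.range (A.submatrix i.succAbove i.succAbove)ᵀ.mulVecLin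

/-- The cokernel of an integer matrix acting on row vectors, with target restricted to `ℤ₀ⁿ`. For
the Laplacian it is the total sandpile group `S`. -/
abbrev ZeroSumCokernel {m : Type*} [Fintype m] (A : Matrix m (Fin n) ℤ) : Type :=
  zeroSum n ⧸ (LinearMap.range Aᵀ.mulVecLin).comap (zeroSum n).subtype

/-- The class in the reduced cokernel at `i` of the `i`-th row of `A` with its `i`-th entry deleted.
For the Laplacian it is the element `γᵢ` of `Sᵢ`. -/
def deletedRowClass (A : Matrix (Fin (n + 1)) (Fin (n + 1)) R) (i : Fin (n + 1)) :
    ReducedCokernel A i :=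
  Submodule.Quotient.mk (i.removeNth (A.row i))

theorem removeNth_vecMul (A : Matrix (Fin (n + 1)) (Fin (n + 1)) R) (i : Fin (n + 1))
    (x : Fin (n + 1) → R) :
    i.removeNth (x ᵥ* A) =
      i.removeNth x ᵥ* A.submatrix i.succAbove i.succAbove + x i • i.removeNth (A.row i) := by
  ext j
  simp [vecMul, dotProduct, Fin.removeNth_apply, Fin.sum_univ_succAbove _ i, add_comm]

theorem smul_deletedRowClass_eq_zero {A : Matrix (Fin (n + 1)) (Fin (n + 1)) R}
    {x : Fin (n + 1) → R} (hx : x ᵥ* A = 0) (i : Fin (n + 1)) :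
    x i • deletedRowClass A i = 0 := by
  have relation : i.removeNth x ᵥ* A.submatrix i.succAbove i.succAbove +
      x i • i.removeNth (A.row i) = 0 := by
    rw [← removeNth_vecMul, hx]
    rfl
  rw [deletedRowClass, ← Submodule.Quotient.mk_smul, Submodule.Quotient.mk_eq_zero,
    mulVecLin_transpose, eq_neg_of_add_eq_zero_right relation]
  exact neg_mem ⟨_, rfl⟩

theorem map_funLeft_succAbove_range_transpose (A : Matrix (Fin (n + 1)) (Fin (n + 1)) R)
    (i : Fin (n + 1)) :
    (LinearMap.range Aᵀ.mulVecLin).map (LinearMap.funLeft R R i.succAbove) =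
      LinearMap.range (A.submatrix i.succAbove i.succAbove)ᵀ.mulVecLin ⊔
        Submodule.span R {i.removeNth (A.row i)} := by
  simp only [mulVecLin_transpose]
  apply le_antisymm
  · rintro _ ⟨_, ⟨x, rfl⟩, rfl⟩
    change i.removeNth (x ᵥ* A) ∈ _
    rw [removeNth_vecMul]
    exact Submodule.add_mem_sup ⟨_, rfl⟩ (Submodule.mem_span_singleton.mpr ⟨x i, rfl⟩)
  · refine sup_le ?_ ((Submodule.span_singleton_le_iff_mem _ _).mpr ?_)
    · rintro _ ⟨y, rfl⟩
      refine ⟨_, ⟨i.insertNth 0 y, rfl⟩, (removeNth_vecMul A i _).trans ?_⟩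
      simp
    · exact ⟨A.row i, ⟨Pi.single i 1, single_one_vecMul i A⟩, rfl⟩

theorem vecMul_mem_zeroSum {m : Type*} [Fintype m] {A : Matrix m (Fin n) ℤ} (hA : A *ᵥ 1 = 0)
    (x : m → ℤ) : x ᵥ* A ∈ zeroSum n := by
  rw [mem_zeroSum, ← dotProduct_one, ← dotProduct_mulVec, hA, dotProduct_zero]

theorem range_transpose_mulVecLin_le_zeroSum {m : Type*} [Fintype m] {A : Matrix m (Fin n) ℤ}
    (hA : A *ᵥ 1 = 0) : LinearMap.range Aᵀ.mulVecLin ≤ zeroSum n := by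
  rintro _ ⟨x, rfl⟩
  rw [mulVecLin_transpose]
  exact vecMul_mem_zeroSum hA x

theorem nonempty_quotient_deletedRowClass_addEquiv {A : Matrix (Fin (n + 1)) (Fin (n + 1)) ℤ}
    (hA : A *ᵥ 1 = 0) (i : Fin (n + 1)) :
    Nonempty ((ReducedCokernel A i ⧸ AddSubgroup.zmultiples (deletedRowClass A i)) ≃+
      ZeroSumCokernel A) := by
  obtain ⟨e⟩ := nonempty_quotient_zmultiples_addEquiv_quotient_sup
    (LinearMap.range (A.submatrix i.succAbove i.succAbove)ᵀ.mulVecLin) (i.removeNth (A.row i))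
  refine ⟨e.trans (Submodule.Quotient.equiv _ _ (zeroSumDeleteEquiv i) ?_).symm.toAddEquiv⟩
  rw [map_zeroSumDeleteEquiv_comap_subtype i (range_transpose_mulVecLin_le_zeroSum hA),
    map_funLeft_succAbove_range_transpose]

end Cokernels

/-- An element of infinite order has `addOrderOf` equal to `0`, which is neutral for `gcd`: the last
clause says that the finite orders among those of the `γ i` have greatest common divisor `1`. -/
theorem exists_gamma_quotient_iso_total_general {n : ℕ}
    (A : Matrix (Fin (n + 1)) (Fin (n + 1)) ℤ) (hA : A *ᵥ 1 = 0) :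
    ∃ γ : ∀ i : Fin (n + 1), ReducedCokernel A i,
      (∀ i, Nonempty
        ((ReducedCokernel A i ⧸ AddSubgroup.zmultiples (γ i)) ≃+ ZeroSumCokernel A)) ∧
      Finset.univ.gcd (fun i : Fin (n + 1) => addOrderOf (γ i)) = 1 := by
  have det_eq_zero : A.det = 0 := exists_mulVec_eq_zero_iff.mp ⟨1, one_ne_zero, hA⟩
  obtain ⟨x, hgcd, hx⟩ := exists_gcd_eq_one_and_vecMul_eq_zero det_eq_zero
  refine ⟨deletedRowClass A, nonempty_quotient_deletedRowClass_addEquiv hA, ?_⟩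
  have gcd_dvd := gcd_addOrderOf_dvd_gcd (s := Finset.univ) fun i _ =>
    smul_deletedRowClass_eq_zero hx i
  rw [hgcd] at gcd_dvd
  exact Nat.dvd_one.mp (by exact_mod_cast gcd_dvd)

theorem digraphLaplacian_mulVec_one {n : ℕ} (d : Fin n → Fin n → ℕ) :
    digraphLaplacian d *ᵥ 1 = 0 := by
  ext i
  have off_diagonal : ∑ j ∈ Finset.univ.erase i, digraphLaplacian d i j =
      ∑ j ∈ Finset.univ.erase i, -(d i j : ℤ) :=
    Finset.sum_congr rfl fun j hj => by
      simp [digraphLaplacian, (Finset.ne_of_mem_erase hj).symm]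
  change ∑ j, digraphLaplacian d i j * 1 = 0
  simp only [mul_one]
  rw [← Finset.add_sum_erase _ _ (Finset.mem_univ i), off_diagonal]
  simp [digraphLaplacian]

/-- Farrell–Levine: for a strongly connected digraph, there are elements `γ_i ∈ S_i` such
that `S_i / ⟨γ_i⟩ ≅ S` for all `i` and `gcd_i ord(γ_i) = 1`. -/
theorem exists_gamma_quotient_iso_total {n : ℕ}
    (d : Fin (n + 1) → Fin (n + 1) → ℕ) (hconn : StronglyConnected d) :
    ∃ γ : ∀ i : Fin (n + 1), vertexSandpile d i,
      (∀ i, Nonempty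
        ((vertexSandpile d i ⧸ AddSubgroup.zmultiples (γ i)) ≃+ totalSandpile d)) ∧
      Finset.univ.gcd (fun i : Fin (n + 1) => addOrderOf (γ i)) = 1 :=
  exists_gamma_quotient_iso_total_general (digraphLaplacian d) (digraphLaplacian_mulVec_one d)

end
end
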